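/- arXiv:math/0009239 — 4 statements merged into one kernel-verified Lean document; each statement's English description precedes it below -/
import Mathlib

section
/- Let L be a maximal subalgebra of Vect_pol(E). Then the Euler vector field ℰ belongs to L if and only if L is graded. -/
/-!
The operator `ad ℰ` is diagonalizable on `Vect_pol(E)`: the field `x^s ∂_i` is an eigenvector
for the eigenvalue `|s| - 1` by Euler's identity (`iSup_VectP`).

If `ℰ ∈ L`, then `L` is stable under `ad ℰ`, and a subspace stable under an operator contains every
eigencomponent of each of its elements (`mem_of_sum_eigenvectors_mem`). Hence `L` is graded.

If `L` is graded, then `[ℰ, L] ⊆ L`, so `L + 𝕜ℰ` is a subalgebra. By maximality, either it equals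
`L`, and `ℰ ∈ L`, or it is all of `Vect_pol(E)`. In the second case every bracket of two vector
fields lies in `[L + 𝕜ℰ, L + 𝕜ℰ] ⊆ L`, and `ℰ = ½ ∑ [∂_i, x_i² ∂_i]` is a sum of brackets, so
`ℰ ∈ L` again.
-/


open MvPolynomial

/-- The Lie algebra of polynomial vector fields on `E = 𝕜^n`, realized as the
derivations of the polynomial algebra `𝕜[x_1, …, x_n]`. -/
abbrev Vect (𝕜 : Type*) [Field 𝕜] (n : ℕ) : Type _ :=
  Derivation 𝕜 (MvPolynomial (Fin n) 𝕜) (MvPolynomial (Fin n) 𝕜)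

variable (𝕜 : Type*) [Field 𝕜] (n : ℕ)

/-- The Euler vector field `ℰ = Σ x^j ∂_j`. -/
noncomputable def euler : Vect 𝕜 n :=
  MvPolynomial.mkDerivation 𝕜 fun i => MvPolynomial.X i

/-- `Vect_p(E)`: the eigenspace of `ad(ℰ)` for the eigenvalue `p`, i.e. the vector fields
with homogeneous coefficients of degree `p+1`. -/
noncomputable def VectP (p : ℤ) : Submodule 𝕜 (Vect 𝕜 n) :=
  Module.End.eigenspace (LieAlgebra.ad 𝕜 (Vect 𝕜 n) (euler 𝕜 n)) ((p : 𝕜))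

/-- A Lie subalgebra `L` of `Vect_pol(E)` is graded if `L = ⊕_{p ≥ -1} (L ∩ Vect_p(E))`. -/
def IsGradedSubalg (L : LieSubalgebra 𝕜 (Vect 𝕜 n)) : Prop :=
  L.toSubmodule = ⨆ p ≥ (-1 : ℤ), (L.toSubmodule ⊓ VectP 𝕜 n p)

/-- A Lie subalgebra `L` of `Vect_pol(E)` is maximal if the only subalgebras containing it
are `L` itself and `Vect_pol(E)`. -/
def IsMaxSubalg (L : LieSubalgebra 𝕜 (Vect 𝕜 n)) : Prop :=
  ∀ L' : LieSubalgebra 𝕜 (Vect 𝕜 n), L ≤ L' → L' = L ∨ L' = ⊤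

/-- A subspace stable under `f` contains each term of a finite sum of eigenvectors of `f` for
distinct eigenvalues as soon as it contains the sum. No finiteness of the dimension is needed. -/
theorem mem_of_sum_eigenvectors_mem {K V ι : Type*} [Field K] [AddCommGroup V] [Module K V]
    (f : Module.End K V) (P : Submodule K V) (hP : ∀ x ∈ P, f x ∈ P)
    (μ : ι → K) (hμ : Function.Injective μ) (S : Finset ι) :
    ∀ v : ι → V, (∀ i, f (v i) = μ i • v i) → ∑ i ∈ S, v i ∈ P → ∀ i ∈ S, v i ∈ P := by
  classical
  induction S using Finset.induction_on with
  | empty => simp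
  | insert a S ha ih =>
    intro v hv hsum
    -- Applying `f - μ a` to the sum kills the term `v a` and rescales the others.
    have h1 : ∑ i ∈ S, (μ i - μ a) • v i ∈ P := by
      have h := P.sub_mem (hP _ hsum) (P.smul_mem (μ a) hsum)
      have e : f (∑ i ∈ insert a S, v i) - μ a • ∑ i ∈ insert a S, v i
          = ∑ i ∈ S, (μ i - μ a) • v i := by
        rw [Finset.sum_insert ha, map_add, map_sum, hv a, smul_add, Finset.smul_sum,
          add_sub_add_left_eq_sub, ← Finset.sum_sub_distrib]
        exact Finset.sum_congr rfl fun i _ => by rw [hv i, sub_smul]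
      rwa [e] at h
    have h2 : ∀ i ∈ S, v i ∈ P := by
      intro i hi
      have h := ih (fun i => (μ i - μ a) • v i)
        (fun i => by rw [map_smul, hv i, smul_comm]) h1 i hi
      have hne : μ i - μ a ≠ 0 := sub_ne_zero.mpr fun h => ha (hμ h ▸ hi)
      exact (P.smul_mem_iff hne).mp h
    intro i hi
    rcases Finset.mem_insert.mp hi with rfl | hi
    · rw [Finset.sum_insert ha] at hsum
      exact (P.add_mem_iff_left (P.sum_mem h2)).mp hsum
    · exact h2 i hi

section
variable {K : Type*} [Field K] {m : ℕ}

theorem mem_VectP {p : ℤ} {D : Vect K m} :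
    D ∈ VectP K m p ↔ ⁅euler K m, D⁆ = (p : K) • D := by
  rw [VectP, Module.End.mem_eigenspace_iff, LieAlgebra.ad_apply]

theorem vect_sum_apply {ι : Type*} (S : Finset ι) (D : ι → Vect K m)
    (f : MvPolynomial (Fin m) K) : (∑ i ∈ S, D i) f = ∑ i ∈ S, D i f := by
  classical
  induction S using Finset.induction_on with
  | empty => simp
  | insert a S ha ih => rw [Finset.sum_insert ha, Finset.sum_insert ha, Derivation.add_apply, ih]

/-- Euler's identity on monomials. -/
theorem euler_monomial (s : Fin m →₀ ℕ) (c : K) :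
    euler K m (monomial s c) = (s.degree : K) • monomial s c := by
  have h : euler K m = ∑ i, (X i : MvPolynomial (Fin m) K) • pderiv i := by
    refine derivation_ext fun j => ?_
    simp [euler, mkDerivation_X, vect_sum_apply, pderiv_X, Pi.single_apply]
  have h2 := (isHomogeneous_monomial c (n := s.degree) (d := s) rfl).sum_X_mul_pderiv
  rw [h, vect_sum_apply]
  simpa only [Derivation.smul_apply, smul_eq_mul, Nat.cast_smul_eq_nsmul] using h2

theorem monomial_pderiv_mem_VectP (s : Fin m →₀ ℕ) (c : K) (i : Fin m) :
    (monomial s c : MvPolynomial (Fin m) K) • (pderiv i : Vect K m)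
      ∈ VectP K m ((s.degree : ℤ) - 1) := by
  rw [mem_VectP]
  refine derivation_ext fun j => ?_
  rw [Derivation.commutator_apply]
  have hX : euler K m (X j) = X j := by simp [euler, mkDerivation_X]
  rw [hX]
  by_cases hij : i = j
  · subst hij
    simp [euler_monomial, sub_smul]
  · simp [pderiv_X_of_ne (R := K) (Ne.symm hij)]

/-- Polynomial vector fields are sums of homogeneous ones; the index `k` is the degree of the
coefficients, so that the eigenvalue is `k - 1`. -/
theorem iSup_VectP : ⨆ k : ℕ, VectP K m ((k : ℤ) - 1) = ⊤ := by
  refine eq_top_iff.mpr fun D _ => ?_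
  have hD : D = ∑ i, (D (X i)) • (pderiv i : Vect K m) := by
    refine derivation_ext fun j => ?_
    simp [vect_sum_apply, pderiv_X, Pi.single_apply]
  rw [hD]
  refine Submodule.sum_mem _ fun i _ => ?_
  rw [(D (X i)).as_sum, Finset.sum_smul]
  refine Submodule.sum_mem _ fun s _ => ?_
  exact Submodule.mem_iSup_of_mem s.degree (monomial_pderiv_mem_VectP _ _ _)

/-- The Euler field is `½ ∑ [∂_i, x_i² ∂_i]`, so it lies in every subspace containing all
brackets. -/
theorem euler_mem_of_lie_mem [CharZero K] (P : Submodule K (Vect K m))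
    (h : ∀ D D' : Vect K m, ⁅D, D'⁆ ∈ P) : euler K m ∈ P := by
  have e : euler K m = (2 : K)⁻¹ • ∑ i, ⁅(pderiv i : Vect K m),
      ((X i : MvPolynomial (Fin m) K) ^ 2) • (pderiv i : Vect K m)⁆ := by
    rw [eq_inv_smul_iff₀ two_ne_zero]
    refine derivation_ext fun j => ?_
    rw [vect_sum_apply, Finset.sum_eq_single j]
    · simp [Derivation.commutator_apply, euler, mkDerivation_X, ofNat_smul_eq_nsmul]
    · intro i _ hij
      simp [Derivation.commutator_apply, pderiv_X_of_ne (R := K) (Ne.symm hij)]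
    · simp
  rw [e]
  exact P.smul_mem _ (P.sum_mem fun i _ => h _ _)

theorem isGraded_of_euler_mem [CharZero K] (L : LieSubalgebra K (Vect K m))
    (hE : euler K m ∈ L) : IsGradedSubalg K m L := by
  refine le_antisymm (fun D hD => ?_) (iSup₂_le fun p _ => inf_le_left)
  have hT : D ∈ ⨆ k : ℕ, VectP K m ((k : ℤ) - 1) := by rw [iSup_VectP]; trivial
  obtain ⟨v, hv, hsum⟩ := (Submodule.mem_iSup_iff_exists_finsupp _ _).mp hT
  have hmem := mem_of_sum_eigenvectors_mem (LieAlgebra.ad K (Vect K m) (euler K m))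
    L.toSubmodule (fun x hx => L.lie_mem hE hx) (fun k : ℕ => (((k : ℤ) - 1 : ℤ) : K))
    (fun a b hab => by simpa using hab) v.support v
    (fun k => mem_VectP.mp (hv k)) (by rw [Finsupp.sum] at hsum; rwa [hsum])
  rw [← hsum]
  refine Submodule.sum_mem _ fun k hk => ?_
  exact Submodule.mem_iSup_of_mem ((k : ℤ) - 1)
    (Submodule.mem_iSup_of_mem (by omega) ⟨hmem k hk, hv k⟩)

theorem lie_euler_mem_of_isGraded {L : LieSubalgebra K (Vect K m)}
    (hL : IsGradedSubalg K m L) {D : Vect K m} (hD : D ∈ L) : ⁅euler K m, D⁆ ∈ L := by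
  have h : (⨆ p ≥ (-1 : ℤ), (L.toSubmodule ⊓ VectP K m p))
      ≤ L.toSubmodule.comap (LieAlgebra.ad K (Vect K m) (euler K m) :
        Vect K m →ₗ[K] Vect K m) := by
    refine iSup₂_le fun p _ x hx => ?_
    rw [Submodule.mem_comap, LieAlgebra.ad_apply, mem_VectP.mp hx.2]
    exact L.toSubmodule.smul_mem _ hx.1
  exact h (hL ▸ hD : D ∈ ⨆ p ≥ (-1 : ℤ), (L.toSubmodule ⊓ VectP K m p))

theorem add_smul_lie_add_smul {V : Type*} [LieRing V] [LieAlgebra K V] (a b e : V) (s t : K) :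
    ⁅a + s • e, b + t • e⁆ = ⁅a, b⁆ - t • ⁅e, a⁆ + s • ⁅e, b⁆ := by
  rw [← lie_skew e a]
  simp only [add_lie, lie_add, smul_lie, lie_smul, lie_self, smul_zero, smul_neg]
  abel_nf

/-- For `L` normalized by `ℰ`, brackets of elements of `L + 𝕜ℰ` lie in `L`. -/
theorem lie_mem_of_mem_sup {L : LieSubalgebra K (Vect K m)}
    (hL : ∀ D ∈ L, ⁅euler K m, D⁆ ∈ L) {x y : Vect K m}
    (hx : x ∈ L.toSubmodule ⊔ K ∙ euler K m) (hy : y ∈ L.toSubmodule ⊔ K ∙ euler K m) :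
    ⁅x, y⁆ ∈ L := by
  obtain ⟨a, ha, _, hs, rfl⟩ := Submodule.mem_sup.mp hx
  obtain ⟨b, hb, _, ht, rfl⟩ := Submodule.mem_sup.mp hy
  obtain ⟨s, rfl⟩ := Submodule.mem_span_singleton.mp hs
  obtain ⟨t, rfl⟩ := Submodule.mem_span_singleton.mp ht
  have e : ⁅a + s • euler K m, b + t • euler K m⁆
      = ⁅a, b⁆ - t • ⁅euler K m, a⁆ + s • ⁅euler K m, b⁆ :=
    add_smul_lie_add_smul _ _ _ _ _
  rw [e]
  exact L.add_mem (L.sub_mem (L.lie_mem ha hb) (L.smul_mem t (hL a ha))) (L.smul_mem s (hL b hb))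

end

/-- Let `L` be a maximal subalgebra of `Vect_pol(E)` (`𝕜 = ℝ` or `ℂ`).
Then the Euler vector field `ℰ` belongs to `L` if and only if `L` is graded. -/
theorem statement1 (𝕜 : Type) [RCLike 𝕜] (n : ℕ) (hn : 0 < n)
    (L : LieSubalgebra 𝕜 (Vect 𝕜 n)) (hmax : IsMaxSubalg 𝕜 n L) :
    euler 𝕜 n ∈ L ↔ IsGradedSubalg 𝕜 n L := by
  refine ⟨isGraded_of_euler_mem L, fun hL => ?_⟩
  have hnorm : ∀ D ∈ L, ⁅euler 𝕜 n, D⁆ ∈ L := fun D hD => lie_euler_mem_of_isGraded hL hD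
  let L' : LieSubalgebra 𝕜 (Vect 𝕜 n) :=
    { L.toSubmodule ⊔ 𝕜 ∙ euler 𝕜 n with
      lie_mem' := fun hx hy => Submodule.mem_sup_left (lie_mem_of_mem_sup hnorm hx hy) }
  have hle : L ≤ L' := fun x hx => Submodule.mem_sup_left hx
  rcases hmax L' hle with h | h
  · rw [← h]
    exact Submodule.mem_sup_right (Submodule.mem_span_singleton_self _)
  · have hall : ∀ D : Vect 𝕜 n, D ∈ L' := fun D => h ▸ LieSubalgebra.mem_top D
    exact euler_mem_of_lie_mem L.toSubmodule fun D D' =>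
      lie_mem_of_mem_sup hnorm (hall D) (hall D')
end

section
/- Let L_{−1}, L_0 and L_+ be vector subspaces of Vect_{−1}(E), Vect_0(E) and ⊕_{i ≥ 1} Vect_i(E) respectively, such that (1) L_{−1} ⊕ L_0 is a Lie subalgebra of Vect_pol(E), and (2) [L_{−1}, L_+] ⊆ L_0 ⊕ L_+ and [L_0, L_+] ⊆ L_+. Set C^0(L_+) = L_+ and C^{k+1}(L_+) = [L_+, C^k(L_+)] for k ∈ ℕ. Then the smallest Lie subalgebra of Vect_pol(E) containing L_{−1} ⊕ L_0 ⊕ L_+ is L_{−1} ⊕ L_0 ⊕ Σ_{k ∈ ℕ} C^k(L_+). In particular, if L_+ ⊆ Vect_1(E), this subalgebra is graded. -/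
/-!
Write `S = Σ_k C^k(L₊)`. Everything reduces to showing that `L₋₁ + L₀ + S` is closed under the
bracket, since each `C^k(L₊)` clearly lies in any subalgebra containing `L₊`. Three inductions
based on the Jacobi identity give this:

* `[C^i, C^j] ⊆ C^{i+j+1}` (`lie_descC_descC`), so `[S, S] ⊆ S`;
* `[L₀, C^k] ⊆ C^k` (`lie_zero_descC`), so `[L₀, S] ⊆ S`;
* `[L₋₁, C^k] ⊆ L₀ + S` (`lie_neg_descC`): for `x ∈ L₋₁`, `y ∈ L₊`, `z ∈ C^k`, one has
  `[x, [y, z]] = [[x, y], z] + [y, [x, z]]`, where `[x, y] ∈ L₀ + L₊` and, inductively,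
  `[x, z] ∈ L₀ + S`.

If `L₊ ⊆ Vect₁`, then `C^k(L₊) ⊆ Vect_{k+1}` because brackets add `ad ℰ`-eigenvalues, so the
subalgebra is a sum of homogeneous subspaces and hence graded.
-/

open MvPolynomial

variable (𝕜 : Type*) [Field 𝕜] (n : ℕ)

/-- The descending sequence `C^0(L₊) = L₊`, `C^{k+1}(L₊) = [L₊, C^k(L₊)]`. -/
noncomputable def descC (Lplus : Submodule 𝕜 (Vect 𝕜 n)) : ℕ → Submodule 𝕜 (Vect 𝕜 n)
  | 0 => Lplus
  | (k + 1) => Submodule.span 𝕜 {z | ∃ x ∈ Lplus, ∃ y ∈ descC Lplus k, z = ⁅x, y⁆}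

section Helpers

variable {𝕜 : Type*} [Field 𝕜] {n : ℕ}

theorem lie_mem_of_mem_sup_left {A B C : Submodule 𝕜 (Vect 𝕜 n)} {y : Vect 𝕜 n}
    (hA : ∀ x ∈ A, ⁅x, y⁆ ∈ C) (hB : ∀ x ∈ B, ⁅x, y⁆ ∈ C) :
    ∀ x ∈ A ⊔ B, ⁅x, y⁆ ∈ C := by
  intro x hx
  obtain ⟨a, ha, b, hb, rfl⟩ := Submodule.mem_sup.1 hx
  rw [show ⁅a + b, y⁆ = ⁅a, y⁆ + ⁅b, y⁆ from add_lie a b y]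
  exact C.add_mem (hA a ha) (hB b hb)

theorem lie_mem_of_mem_sup_right {A B C : Submodule 𝕜 (Vect 𝕜 n)} {x : Vect 𝕜 n}
    (hA : ∀ y ∈ A, ⁅x, y⁆ ∈ C) (hB : ∀ y ∈ B, ⁅x, y⁆ ∈ C) :
    ∀ y ∈ A ⊔ B, ⁅x, y⁆ ∈ C := by
  intro y hy
  obtain ⟨a, ha, b, hb, rfl⟩ := Submodule.mem_sup.1 hy
  rw [show ⁅x, a + b⁆ = ⁅x, a⁆ + ⁅x, b⁆ from lie_add x a b]
  exact C.add_mem (hA a ha) (hB b hb)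

theorem lie_mem_of_mem_iSup_right {A : ℕ → Submodule 𝕜 (Vect 𝕜 n)}
    {C : Submodule 𝕜 (Vect 𝕜 n)} {x : Vect 𝕜 n}
    (hA : ∀ k, ∀ y ∈ A k, ⁅x, y⁆ ∈ C) : ∀ y ∈ ⨆ k, A k, ⁅x, y⁆ ∈ C := by
  have h : (⨆ k, A k) ≤ C.comap (LieAlgebra.ad 𝕜 (Vect 𝕜 n) x) :=
    iSup_le fun k y hy => hA k y hy
  exact fun y hy => h hy

theorem lie_mem_comm {C : Submodule 𝕜 (Vect 𝕜 n)} {x y : Vect 𝕜 n} (h : ⁅x, y⁆ ∈ C) :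
    ⁅y, x⁆ ∈ C := by
  rw [← lie_skew]
  exact C.neg_mem h

/-- The Jacobi identity for vector fields, stated with the bracket in the form instance search finds
on derivations, so that it can be used for rewriting (the general `lie_lie` does not match it
syntactically). -/
theorem vect_lie_lie (x y z : Vect 𝕜 n) : ⁅⁅x, y⁆, z⁆ = ⁅x, ⁅y, z⁆⁆ - ⁅y, ⁅x, z⁆⁆ :=
  lie_lie x y z

theorem vect_leibniz_lie (x y z : Vect 𝕜 n) : ⁅x, ⁅y, z⁆⁆ = ⁅⁅x, y⁆, z⁆ + ⁅y, ⁅x, z⁆⁆ := by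
  rw [vect_lie_lie, sub_add_cancel]

theorem lie_mem_descC_succ {Lp : Submodule 𝕜 (Vect 𝕜 n)} {k : ℕ} {x y : Vect 𝕜 n}
    (hx : x ∈ Lp) (hy : y ∈ descC 𝕜 n Lp k) : ⁅x, y⁆ ∈ descC 𝕜 n Lp (k + 1) :=
  Submodule.subset_span ⟨x, hx, y, hy, rfl⟩

theorem descC_succ_le {Lp C : Submodule 𝕜 (Vect 𝕜 n)} {k : ℕ}
    (h : ∀ x ∈ Lp, ∀ y ∈ descC 𝕜 n Lp k, ⁅x, y⁆ ∈ C) : descC 𝕜 n Lp (k + 1) ≤ C := by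
  refine Submodule.span_le.2 ?_
  rintro _ ⟨x, hx, y, hy, rfl⟩
  exact h x hx y hy

theorem descC_le_iSup (Lp : Submodule 𝕜 (Vect 𝕜 n)) (k : ℕ) :
    descC 𝕜 n Lp k ≤ ⨆ k, descC 𝕜 n Lp k :=
  le_iSup (descC 𝕜 n Lp) k

theorem lie_descC_descC (Lp : Submodule 𝕜 (Vect 𝕜 n)) (i : ℕ) :
    ∀ j, ∀ x ∈ descC 𝕜 n Lp i, ∀ y ∈ descC 𝕜 n Lp j, ⁅x, y⁆ ∈ descC 𝕜 n Lp (i + j + 1) := by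
  induction i with
  | zero =>
    intro j x hx y hy
    rw [zero_add]
    exact lie_mem_descC_succ hx hy
  | succ i ih =>
    intro j w hw z hz
    have h : descC 𝕜 n Lp (i + 1) ≤
        (descC 𝕜 n Lp (i + 1 + j + 1)).comap (LieAlgebra.ad 𝕜 (Vect 𝕜 n) z) := by
      refine descC_succ_le fun x hx y hy => ?_
      change ⁅z, ⁅x, y⁆⁆ ∈ descC 𝕜 n Lp (i + 1 + j + 1)
      apply lie_mem_comm
      rw [vect_lie_lie]
      refine Submodule.sub_mem _ ?_ ?_
      · have := lie_mem_descC_succ hx (ih j y hy z hz)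
        rwa [show i + 1 + j + 1 = i + j + 1 + 1 by ring]
      · have := ih (j + 1) y hy _ (lie_mem_descC_succ hx hz)
        rwa [show i + 1 + j + 1 = i + (j + 1) + 1 by ring]
    exact lie_mem_comm (h hw)

theorem lie_zero_descC {L0 Lp : Submodule 𝕜 (Vect 𝕜 n)}
    (hbr2 : ∀ x ∈ L0, ∀ y ∈ Lp, ⁅x, y⁆ ∈ Lp) (k : ℕ) :
    ∀ x ∈ L0, ∀ y ∈ descC 𝕜 n Lp k, ⁅x, y⁆ ∈ descC 𝕜 n Lp k := by
  induction k with
  | zero => exact hbr2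
  | succ k ih =>
    intro x hx w hw
    have h : descC 𝕜 n Lp (k + 1) ≤
        (descC 𝕜 n Lp (k + 1)).comap (LieAlgebra.ad 𝕜 (Vect 𝕜 n) x) := by
      refine descC_succ_le fun y hy z hz => ?_
      change ⁅x, ⁅y, z⁆⁆ ∈ descC 𝕜 n Lp (k + 1)
      rw [vect_leibniz_lie]
      exact Submodule.add_mem _ (lie_mem_descC_succ (hbr2 x hx y hy) hz)
        (lie_mem_descC_succ hy (ih x hx z hz))
    exact h hw

theorem lie_neg_descC {Lm1 L0 Lp : Submodule 𝕜 (Vect 𝕜 n)}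
    (hbr1 : ∀ x ∈ Lm1, ∀ y ∈ Lp, ⁅x, y⁆ ∈ L0 ⊔ Lp)
    (hbr2 : ∀ x ∈ L0, ∀ y ∈ Lp, ⁅x, y⁆ ∈ Lp) (k : ℕ) :
    ∀ x ∈ Lm1, ∀ y ∈ descC 𝕜 n Lp k, ⁅x, y⁆ ∈ L0 ⊔ ⨆ k, descC 𝕜 n Lp k := by
  induction k with
  | zero =>
    intro x hx y hy
    exact sup_le_sup_left (descC_le_iSup Lp 0) L0 (hbr1 x hx y hy)
  | succ k ih =>
    intro x hx w hw
    have h : descC 𝕜 n Lp (k + 1) ≤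
        (⨆ k, descC 𝕜 n Lp k).comap (LieAlgebra.ad 𝕜 (Vect 𝕜 n) x) := by
      refine descC_succ_le fun y hy z hz => ?_
      change ⁅x, ⁅y, z⁆⁆ ∈ ⨆ k, descC 𝕜 n Lp k
      rw [vect_leibniz_lie]
      refine Submodule.add_mem _ ?_ ?_
      · exact lie_mem_of_mem_sup_left
          (fun u hu => descC_le_iSup Lp k (lie_zero_descC hbr2 k u hu z hz))
          (fun u hu => descC_le_iSup Lp (k + 1) (lie_mem_descC_succ hu hz)) _ (hbr1 x hx y hy)
      · exact lie_mem_of_mem_sup_right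
          (fun u hu => descC_le_iSup Lp 0 (lie_mem_comm (hbr2 u hu y hy)))
          (lie_mem_of_mem_iSup_right fun j u hu =>
            descC_le_iSup Lp (j + 1) (lie_mem_descC_succ hy hu)) _ (ih x hx z hz)
    exact (le_sup_right : _ ≤ L0 ⊔ _) (h hw)

theorem lie_mem_vectP {p q : ℤ} {x y : Vect 𝕜 n}
    (hx : x ∈ VectP 𝕜 n p) (hy : y ∈ VectP 𝕜 n q) : ⁅x, y⁆ ∈ VectP 𝕜 n (p + q) := by
  rw [VectP, Module.End.mem_eigenspace_iff, LieAlgebra.ad_apply] at *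
  rw [leibniz_lie, hx, hy, show ⁅(p : 𝕜) • x, y⁆ = (p : 𝕜) • ⁅x, y⁆ from smul_lie _ x y,
    show ⁅x, (q : 𝕜) • y⁆ = (q : 𝕜) • ⁅x, y⁆ from lie_smul _ x y, ← add_smul, Int.cast_add]

theorem descC_le_vectP {Lp : Submodule 𝕜 (Vect 𝕜 n)} (h : Lp ≤ VectP 𝕜 n 1) (k : ℕ) :
    descC 𝕜 n Lp k ≤ VectP 𝕜 n (k + 1) := by
  induction k with
  | zero => simpa [descC] using h
  | succ k ih =>
    refine descC_succ_le fun x hx y hy => ?_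
    have := lie_mem_vectP (h hx) (ih hy)
    rwa [show ((k + 1 : ℕ) : ℤ) + 1 = 1 + (k + 1) by push_cast; ring]

/-- `L₋₁ + L₀ + Σ_k C^k(L₊)` is closed under the bracket. -/
theorem lie_mem_sum {Lm1 L0 Lp : Submodule 𝕜 (Vect 𝕜 n)}
    (hsub : ∀ x ∈ Lm1 ⊔ L0, ∀ y ∈ Lm1 ⊔ L0, ⁅x, y⁆ ∈ Lm1 ⊔ L0)
    (hbr1 : ∀ x ∈ Lm1, ∀ y ∈ Lp, ⁅x, y⁆ ∈ L0 ⊔ Lp)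
    (hbr2 : ∀ x ∈ L0, ∀ y ∈ Lp, ⁅x, y⁆ ∈ Lp) {x y : Vect 𝕜 n}
    (hx : x ∈ Lm1 ⊔ L0 ⊔ ⨆ k, descC 𝕜 n Lp k) (hy : y ∈ Lm1 ⊔ L0 ⊔ ⨆ k, descC 𝕜 n Lp k) :
    ⁅x, y⁆ ∈ Lm1 ⊔ L0 ⊔ ⨆ k, descC 𝕜 n Lp k := by
  have hle : L0 ⊔ (⨆ k, descC 𝕜 n Lp k) ≤ Lm1 ⊔ L0 ⊔ ⨆ k, descC 𝕜 n Lp k :=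
    sup_le_sup_right le_sup_right _
  have hS : (⨆ k, descC 𝕜 n Lp k) ≤ Lm1 ⊔ L0 ⊔ ⨆ k, descC 𝕜 n Lp k := le_sup_right
  have key : ∀ u ∈ Lm1 ⊔ L0, ∀ v ∈ ⨆ k, descC 𝕜 n Lp k,
      ⁅u, v⁆ ∈ Lm1 ⊔ L0 ⊔ ⨆ k, descC 𝕜 n Lp k := fun u hu v hv =>
    lie_mem_of_mem_sup_left
      (fun a ha => lie_mem_of_mem_iSup_right
        (fun k b hb => hle (lie_neg_descC hbr1 hbr2 k a ha b hb)) v hv)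
      (fun a ha => lie_mem_of_mem_iSup_right
        (fun k b hb => hS (descC_le_iSup Lp k (lie_zero_descC hbr2 k a ha b hb))) v hv) u hu
  refine lie_mem_of_mem_sup_left (fun u hu => ?_) (fun u hu => ?_) x hx
  · exact lie_mem_of_mem_sup_right (fun v hv => Submodule.mem_sup_left (hsub u hu v hv))
      (key u hu) y hy
  · refine lie_mem_of_mem_sup_right (fun v hv => lie_mem_comm (key v hv u hu)) ?_ y hy
    refine lie_mem_of_mem_iSup_right fun j v hv => lie_mem_comm ?_
    exact lie_mem_of_mem_iSup_right
      (fun i w hw => hS (descC_le_iSup Lp _ (lie_descC_descC Lp j i v hv w hw))) u hu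

end Helpers

/-- Let `L₋₁ ⊆ Vect₋₁(E)`, `L₀ ⊆ Vect₀(E)` and `L₊ ⊆ ⊕_{i ≥ 1} Vect_i(E)` be subspaces such
that `L₋₁ ⊕ L₀` is a Lie subalgebra, `[L₋₁, L₊] ⊆ L₀ ⊕ L₊` and `[L₀, L₊] ⊆ L₊`.  Then the
smallest Lie subalgebra containing `L₋₁ ⊕ L₀ ⊕ L₊` is `L₋₁ ⊕ L₀ ⊕ Σ_k C^k(L₊)`; in
particular, if `L₊ ⊆ Vect₁(E)`, this subalgebra is graded. -/
theorem statement3 (𝕜 : Type) [RCLike 𝕜] (n : ℕ) (hn : 0 < n)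
    (Lm1 L0 Lplus : Submodule 𝕜 (Vect 𝕜 n))
    (hm1 : Lm1 ≤ VectP 𝕜 n (-1)) (h0 : L0 ≤ VectP 𝕜 n 0)
    (hplus : Lplus ≤ ⨆ i ≥ (1 : ℤ), VectP 𝕜 n i)
    (hsub : ∀ x ∈ Lm1 ⊔ L0, ∀ y ∈ Lm1 ⊔ L0, ⁅x, y⁆ ∈ Lm1 ⊔ L0)
    (hbr1 : ∀ x ∈ Lm1, ∀ y ∈ Lplus, ⁅x, y⁆ ∈ L0 ⊔ Lplus)
    (hbr2 : ∀ x ∈ L0, ∀ y ∈ Lplus, ⁅x, y⁆ ∈ Lplus) :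
    (LieSubalgebra.lieSpan 𝕜 (Vect 𝕜 n)
        ((Lm1 ⊔ L0 ⊔ Lplus : Submodule 𝕜 (Vect 𝕜 n)) : Set (Vect 𝕜 n))).toSubmodule =
      Lm1 ⊔ L0 ⊔ (⨆ k : ℕ, descC 𝕜 n Lplus k) ∧
    (Lplus ≤ VectP 𝕜 n 1 →
      IsGradedSubalg 𝕜 n (LieSubalgebra.lieSpan 𝕜 (Vect 𝕜 n)
        ((Lm1 ⊔ L0 ⊔ Lplus : Submodule 𝕜 (Vect 𝕜 n)) : Set (Vect 𝕜 n)))) := by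
  have heq : (LieSubalgebra.lieSpan 𝕜 (Vect 𝕜 n)
        ((Lm1 ⊔ L0 ⊔ Lplus : Submodule 𝕜 (Vect 𝕜 n)) : Set (Vect 𝕜 n))).toSubmodule =
      Lm1 ⊔ L0 ⊔ (⨆ k : ℕ, descC 𝕜 n Lplus k) := by
    apply le_antisymm
    · let M : LieSubalgebra 𝕜 (Vect 𝕜 n) :=
        { (Lm1 ⊔ L0 ⊔ (⨆ k : ℕ, descC 𝕜 n Lplus k) : Submodule 𝕜 (Vect 𝕜 n)) with
          lie_mem' := fun hx hy => lie_mem_sum hsub hbr1 hbr2 hx hy }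
      have hM : LieSubalgebra.lieSpan 𝕜 (Vect 𝕜 n)
          ((Lm1 ⊔ L0 ⊔ Lplus : Submodule 𝕜 (Vect 𝕜 n)) : Set (Vect 𝕜 n)) ≤ M :=
        LieSubalgebra.lieSpan_le.2 fun x hx =>
          sup_le_sup_left (descC_le_iSup Lplus 0) (Lm1 ⊔ L0) hx
      exact fun x hx => hM hx
    · have hgen : Lm1 ⊔ L0 ⊔ Lplus ≤ (LieSubalgebra.lieSpan 𝕜 (Vect 𝕜 n)
          ((Lm1 ⊔ L0 ⊔ Lplus : Submodule 𝕜 (Vect 𝕜 n)) : Set (Vect 𝕜 n))).toSubmodule :=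
        fun x hx => LieSubalgebra.subset_lieSpan hx
      refine sup_le (le_sup_left.trans hgen) (iSup_le fun k => ?_)
      induction k with
      | zero => exact le_sup_right.trans hgen
      | succ k ih =>
        exact descC_succ_le fun x hx y hy =>
          LieSubalgebra.lie_mem _ (hgen (Submodule.mem_sup_right hx)) (ih hy)
  refine ⟨heq, fun h1 => ?_⟩
  rw [IsGradedSubalg, heq]
  refine le_antisymm ?_ (iSup₂_le fun p _ => inf_le_left)
  refine sup_le (sup_le ?_ ?_) (iSup_le fun k => ?_)
  · exact le_iSup₂_of_le (-1) le_rfl (le_inf (le_sup_left.trans le_sup_left) hm1)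
  · exact le_iSup₂_of_le 0 (by norm_num) (le_inf (le_sup_right.trans le_sup_left) h0)
  · exact le_iSup₂_of_le ((k : ℤ) + 1) (by omega)
      (le_inf ((descC_le_iSup Lplus k).trans le_sup_right) (descC_le_vectP h1 k))
end

section
/- Let L be a finite-dimensional graded maximal subalgebra of Vect_pol(E). Then Vect_{−1}(E) ⊆ L, i.e. L contains all constant vector fields. -/
/-!
Let `V ⊆ 𝕜^n` be the space of those `c` whose constant field `∂_c` lies in `L`. If `X ∈ L` has
coefficients of degree `d` and `v ∈ V`, then `(ad ∂_v)^d X` is the constant field `d! • ∂_{X(v)}`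
(`ad_constField_pow`), so `X(v) ∈ V`. Hence every element of `L` is tangent to the linear subspace
`V`, i.e. `L` is contained in the subalgebra `tangentSubalg V` of the fields that preserve the
ideal of the polynomials vanishing on `V`.

That subalgebra contains `f • ℰ` for every polynomial `f`, so it is infinite-dimensional and
differs from `L`. By maximality it is everything. But a constant field `∂_c` tangent to `V` has
`c ∈ V`, so `V = 𝕜^n`.
-/

open MvPolynomial

variable (𝕜 : Type*) [Field 𝕜] (n : ℕ)

/-- The constant vector field `∂_c`, for `c ∈ K^m`. -/
noncomputable def constField {K : Type*} [Field K] {m : ℕ} (c : Fin m → K) : Vect K m :=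
  MvPolynomial.mkDerivation K fun i => C (c i)

/-- The value `D(v) ∈ K^m` of the vector field `D` at the point `v`. -/
noncomputable def fieldAt {K : Type*} [Field K] {m : ℕ} (D : Vect K m) (v : Fin m → K) :
    Fin m → K :=
  fun i => eval v (D (X i))

@[simp]
lemma constField_X {K : Type*} [Field K] {m : ℕ} (c : Fin m → K) (i : Fin m) :
    constField c (X i) = C (c i) := by
  simp [constField, mkDerivation_X]

@[simp]
lemma euler_X {K : Type*} [Field K] {m : ℕ} (i : Fin m) :
    euler K m (X i) = X i := by
  simp [euler, mkDerivation_X]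

/-- The value of `D f` at `v` depends only on the value of the field `D` at `v`. -/
lemma eval_apply_eq {K : Type*} [Field K] {m : ℕ} (D : Vect K m) (v : Fin m → K)
    (f : MvPolynomial (Fin m) K) :
    eval v (D f) = eval v (constField (fieldAt D v) f) := by
  induction f using MvPolynomial.induction_on with
  | C a => simp [← algebraMap_eq]
  | add p q hp hq => simp [hp, hq]
  | mul_X p i hp => simp [Derivation.leibniz, hp, fieldAt]

lemma eval_euler {K : Type*} [Field K] {m : ℕ} (v : Fin m → K) (f : MvPolynomial (Fin m) K) :
    eval v (euler K m f) = eval v (constField v f) := by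
  rw [eval_apply_eq]
  congr 3
  ext i
  simp [fieldAt]

lemma coeff_euler {K : Type*} [Field K] {m : ℕ} (f : MvPolynomial (Fin m) K)
    (s : Fin m →₀ ℕ) : coeff s (euler K m f) = (s.degree : K) * coeff s f := by
  induction f using MvPolynomial.induction_on' with
  | monomial u a =>
    have h : euler K m (monomial u a) = (u.degree : K) • monomial u a := by
      rw [euler, mkDerivation_monomial, Finsupp.sum, Finsupp.degree_apply, Nat.cast_sum,
        Finset.sum_smul]
      rw [Finset.smul_sum]
      refine Finset.sum_congr rfl fun i hi => ?_
      have hi' : 1 ≤ u i := Nat.one_le_iff_ne_zero.2 (Finsupp.mem_support_iff.1 hi)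
      have hu : u - Finsupp.single i 1 + Finsupp.single i 1 = u :=
        tsub_add_cancel_of_le (by simpa [Finsupp.single_le_iff] using hi')
      rw [smul_eq_mul, X, monomial_mul, hu]
      simp [smul_monomial, mul_comm]
    rw [h, coeff_smul, coeff_monomial]
    split_ifs with hs
    · subst hs; simp
    · simp
  | add p q hp hq => simp [hp, hq, mul_add]

lemma eq_C_of_euler_eq_zero {K : Type*} [Field K] [CharZero K] {m : ℕ}
    (f : MvPolynomial (Fin m) K) (hf : euler K m f = 0) : f = C (coeff 0 f) := by
  ext s
  have h := coeff_euler f s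
  rw [hf, coeff_zero, eq_comm, mul_eq_zero, Nat.cast_eq_zero, Finsupp.degree_eq_zero_iff] at h
  rw [coeff_C]
  split_ifs with hs
  · rw [← hs]
  · exact h.resolve_left fun h0 => hs h0.symm

/-- The commutation relation `[∂_v, ℰ] = ∂_v`. -/
lemma euler_constField {K : Type*} [Field K] {m : ℕ} (v : Fin m → K)
    (f : MvPolynomial (Fin m) K) :
    euler K m (constField v f) = constField v (euler K m f) - constField v f := by
  have h : ⁅constField v, euler K m⁆ = constField v := by
    refine MvPolynomial.derivation_ext fun i => ?_
    simp [Derivation.commutator_apply, ← algebraMap_eq]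
  have hval := congrArg (fun D : Vect K m => D f) h
  simp only [Derivation.commutator_apply] at hval
  exact eq_sub_of_add_eq' (sub_eq_iff_eq_add.1 hval).symm

/-- For `f` homogeneous of degree `d`, expressed by `ℰ f = d f`, the iterated directional
derivative `∂_v^d f` is the constant `d! f(v)`. -/
lemma constField_iterate {K : Type*} [Field K] [CharZero K] {m : ℕ} (v : Fin m → K) (d : ℕ)
    (f : MvPolynomial (Fin m) K) (hf : euler K m f = (d : K) • f) :
    (constField v)^[d] f = C ((d.factorial : K) * eval v f) := by
  induction d generalizing f with
  | zero =>
    have h := eq_C_of_euler_eq_zero f (by simpa using hf)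
    rw [h]
    simp
  | succ d ih =>
    rw [Function.iterate_succ_apply, ih]
    · have h := eval_euler v f
      rw [hf, smul_eval] at h
      rw [← h, Nat.factorial_succ]
      push_cast
      ring_nf
    · rw [euler_constField, hf, Derivation.map_smul, Nat.cast_succ, add_smul, one_smul,
        add_sub_cancel_right]

lemma euler_apply_of_mem_VectP {K : Type*} [Field K] {m : ℕ} {p : ℤ} {D : Vect K m}
    (hD : D ∈ VectP K m p) (i : Fin m) :
    euler K m (D (X i)) = ((p + 1 : ℤ) : K) • D (X i) := by
  rw [VectP, Module.End.mem_eigenspace_iff, LieAlgebra.ad_apply] at hD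
  have h := congrArg (fun D : Vect K m => D (X i)) hD
  simp only [Derivation.commutator_apply, euler_X, Derivation.smul_apply] at h
  rw [Int.cast_add, Int.cast_one, add_smul, one_smul, ← h, sub_add_cancel]

lemma ad_constField_iterate_X {K : Type*} [Field K] {m : ℕ} (v : Fin m → K) (d : ℕ)
    (D : Vect K m) (i : Fin m) :
    ((fun Y : Vect K m => ⁅constField v, Y⁆)^[d] D) (X i) = (constField v)^[d] (D (X i)) := by
  induction d with
  | zero => rfl
  | succ d ih =>
    rw [Function.iterate_succ_apply', Function.iterate_succ_apply', ← ih,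
      Derivation.commutator_apply, constField_X, ← algebraMap_eq, Derivation.map_algebraMap,
      sub_zero]

/-- The identity `(ad ∂_v)^d D = d! • ∂_{D(v)}` for a vector field `D` with homogeneous
coefficients of degree `d`. -/
lemma ad_constField_pow {K : Type*} [Field K] [CharZero K] {m : ℕ} (v : Fin m → K) (d : ℕ)
    {p : ℤ} (hp : p + 1 = d) {D : Vect K m} (hD : D ∈ VectP K m p) :
    (fun Y : Vect K m => ⁅constField v, Y⁆)^[d] D
      = (d.factorial : K) • constField (fieldAt D v) := by
  refine MvPolynomial.derivation_ext fun i => ?_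
  have h := euler_apply_of_mem_VectP hD i
  rw [hp, Int.cast_natCast] at h
  rw [ad_constField_iterate_X, constField_iterate v d _ h]
  simp [fieldAt, smul_eq_C_mul]

/-- The space of vectors `c` whose constant field `∂_c` belongs to `L`. -/
def constPart {K : Type*} [Field K] {m : ℕ} (L : LieSubalgebra K (Vect K m)) :
    Submodule K (Fin m → K) where
  carrier := {c | constField c ∈ L}
  add_mem' {a b} ha hb := by
    have h : constField (a + b) = constField a + constField b :=
      MvPolynomial.derivation_ext fun i => by simp
    simpa only [Set.mem_ofPred_eq, h] using L.add_mem ha hb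
  zero_mem' := by
    have h : constField (0 : Fin m → K) = 0 :=
      MvPolynomial.derivation_ext fun i => by simp
    simpa only [Set.mem_ofPred_eq, h] using L.zero_mem
  smul_mem' t a ha := by
    have h : constField (t • a) = t • constField a :=
      MvPolynomial.derivation_ext fun i => by simp [smul_eq_C_mul]
    simpa only [Set.mem_ofPred_eq, h] using L.smul_mem t ha

/-- The subalgebra of the vector fields tangent to the linear subspace `V`, defined by the
condition that they preserve the ideal of the polynomials vanishing on `V`. -/
def tangentSubalg {K : Type*} [Field K] {m : ℕ} (V : Submodule K (Fin m → K)) :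
    LieSubalgebra K (Vect K m) where
  carrier := {D | ∀ f, (∀ v ∈ V, eval v f = 0) → ∀ v ∈ V, eval v (D f) = 0}
  add_mem' ha hb f hf v hv := by simp [ha f hf v hv, hb f hf v hv]
  zero_mem' f hf v hv := by simp
  smul_mem' t D hD f hf v hv := by simp [smul_eval, hD f hf v hv]
  lie_mem' ha hb f hf v hv := by
    simp [Derivation.commutator_apply, ha _ (hb f hf) v hv, hb _ (ha f hf) v hv]

/-- A polynomial vanishing on `V` has vanishing derivative along `V`: restrict it to the line
`v + t w`, where it is the zero polynomial in `t`. -/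
lemma eval_constField_eq_zero {K : Type*} [Field K] [CharZero K] {m : ℕ}
    (V : Submodule K (Fin m → K)) (f : MvPolynomial (Fin m) K) (hf : ∀ v ∈ V, eval v f = 0)
    {v w : Fin m → K} (hv : v ∈ V) (hw : w ∈ V) : eval v (constField w f) = 0 := by
  let φ : MvPolynomial (Fin m) K →ₐ[K] Polynomial K :=
    aeval fun i => Polynomial.C (v i) + Polynomial.X * Polynomial.C (w i)
  have heval : ∀ (t : K) (g : MvPolynomial (Fin m) K),
      (φ g).eval t = eval (v + t • w) g := by
    intro t g
    induction g using MvPolynomial.induction_on with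
    | C a => simp [φ]
    | add p q hp hq => simp [hp, hq]
    | mul_X p i hp =>
      have hX : φ (X i) = Polynomial.C (v i) + Polynomial.X * Polynomial.C (w i) := by simp [φ]
      rw [map_mul, Polynomial.eval_mul, hp, hX]
      simp [mul_comm t]
  have hder : ∀ g : MvPolynomial (Fin m) K,
      Polynomial.derivative (φ g) = φ (constField w g) := by
    intro g
    induction g using MvPolynomial.induction_on with
    | C a => simp [← algebraMap_eq]
    | add p q hp hq => simp [hp, hq]
    | mul_X p i hp =>
      have hX : φ (X i) = Polynomial.C (v i) + Polynomial.X * Polynomial.C (w i) := by simp [φ]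
      have hC : φ (C (w i)) = Polynomial.C (w i) := by simp [φ]
      simp only [map_mul, Polynomial.derivative_mul, hp, Derivation.leibniz, constField_X,
        smul_eq_mul, map_add, hX, hC]
      simp only [Polynomial.derivative_C, Polynomial.derivative_X]
      ring
  have hzero : φ f = 0 := by
    refine Polynomial.funext fun t => ?_
    rw [heval, Polynomial.eval_zero]
    exact hf _ (V.add_mem hv (V.smul_mem t hw))
  have h0 := heval 0 (constField w f)
  rw [← hder, hzero] at h0
  simpa using h0.symm

lemma mem_tangentSubalg_of_fieldAt {K : Type*} [Field K] [CharZero K] {m : ℕ}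
    (V : Submodule K (Fin m → K)) (D : Vect K m) (hD : ∀ v ∈ V, fieldAt D v ∈ V) :
    D ∈ tangentSubalg V := by
  intro f hf v hv
  rw [eval_apply_eq]
  exact eval_constField_eq_zero V f hf hv (hD v hv)

lemma le_tangentSubalg {K : Type*} [Field K] [CharZero K] {m : ℕ}
    (L : LieSubalgebra K (Vect K m)) (hL : IsGradedSubalg K m L) :
    L ≤ tangentSubalg (constPart L) := by
  suffices h : L.toSubmodule ≤ (tangentSubalg (constPart L)).toSubmodule from h
  rw [hL]
  refine iSup₂_le fun p hp D hD => mem_tangentSubalg_of_fieldAt _ D fun v hv => ?_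
  obtain ⟨hDL, hDp⟩ := hD
  obtain ⟨d, hd⟩ := Int.eq_ofNat_of_zero_le (show 0 ≤ p + 1 by linarith)
  have hmem : ∀ k : ℕ, (fun Y : Vect K m => ⁅constField v, Y⁆)^[k] D ∈ L := by
    intro k
    induction k with
    | zero => exact hDL
    | succ k ih =>
      rw [Function.iterate_succ_apply']
      exact L.lie_mem hv ih
  have h := hmem d
  rw [ad_constField_pow v d hd hDp] at h
  have hval := L.smul_mem ((d.factorial : K)⁻¹) h
  rwa [inv_smul_smul₀ (Nat.cast_ne_zero.2 d.factorial_ne_zero)] at hval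

/-- The tangent subalgebra contains the free `K[x]`-module spanned by the Euler field. -/
lemma not_finiteDimensional_tangentSubalg {K : Type*} [Field K] [CharZero K] {m : ℕ}
    (hm : 0 < m) (V : Submodule K (Fin m → K)) :
    ¬ FiniteDimensional K (tangentSubalg V) := by
  intro hfin
  have hmem : ∀ f : MvPolynomial (Fin m) K, f • euler K m ∈ tangentSubalg V := by
    refine fun f => mem_tangentSubalg_of_fieldAt V _ fun v hv => ?_
    have h : fieldAt (f • euler K m) v = eval v f • v := by
      ext i
      simp [fieldAt]
    rw [h]
    exact V.smul_mem _ hv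
  let F : MvPolynomial (Fin m) K →ₗ[K] (tangentSubalg V).toSubmodule :=
    { toFun := fun f => ⟨f • euler K m, hmem f⟩
      map_add' := fun f g => Subtype.ext (add_smul f g _)
      map_smul' := fun t f => Subtype.ext (smul_assoc t f _) }
  have hF : Function.Injective F := by
    intro f g hfg
    have h : f • euler K m = g • euler K m := congrArg Subtype.val hfg
    have hval := congrArg (fun D : Vect K m => D (X ⟨0, hm⟩)) h
    simp only [Derivation.smul_apply, euler_X, smul_eq_mul] at hval
    exact mul_right_cancel₀ (X_ne_zero _) hval
  have : Module.Finite K (tangentSubalg V).toSubmodule := hfin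
  have : Module.Finite K (MvPolynomial (Fin m) K) := Module.Finite.of_injective F hF
  have hne : Nonempty (Fin m) := ⟨⟨0, hm⟩⟩
  have hfin' : Finite (Fin m →₀ ℕ) := Module.Finite.finite_basis (basisMonomials (Fin m) K)
  exact not_finite (Fin m →₀ ℕ)

lemma mem_of_constField_mem_tangentSubalg {K : Type*} [Field K] {m : ℕ}
    (V : Submodule K (Fin m → K)) (c : Fin m → K) (hc : constField c ∈ tangentSubalg V) :
    c ∈ V := by
  by_contra hcV
  obtain ⟨φ, hφc, hφV⟩ := Submodule.exists_le_ker_of_notMem hcV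
  -- The linear form `φ`, as a polynomial, vanishes on `V`, and `∂_c` maps it to `φ(c) ≠ 0`.
  have hsum : ∀ v : Fin m → K, ∑ i, φ (Pi.single i 1) * v i = φ v := by
    intro v
    conv_rhs => rw [LinearMap.pi_apply_eq_sum_univ φ v]
    exact Finset.sum_congr rfl fun i _ => by
      rw [smul_eq_mul, mul_comm]
      congr 2
      ext j
      simp [Pi.single_apply, eq_comm]
  have h := hc (∑ i, C (φ (Pi.single i 1)) * X i)
    (fun v hv => by simpa [hsum] using hφV hv) 0 V.zero_mem
  apply hφc
  rw [← hsum c]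
  simpa [← algebraMap_eq] using h

/-- Let `L` be a finite-dimensional graded maximal subalgebra of `Vect_pol(E)`.  Then
`Vect₋₁(E) ⊆ L`, i.e. `L` contains all constant vector fields. -/
theorem statement6 (𝕜 : Type) [RCLike 𝕜] (n : ℕ) (hn : 0 < n)
    (L : LieSubalgebra 𝕜 (Vect 𝕜 n)) (hfd : FiniteDimensional 𝕜 L)
    (hgraded : IsGradedSubalg 𝕜 n L) (hmax : IsMaxSubalg 𝕜 n L) :
    VectP 𝕜 n (-1) ≤ L.toSubmodule := by
  intro D hD
  have hc : ∃ c, D = constField c := by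
    refine ⟨fun i => coeff 0 (D (X i)), MvPolynomial.derivation_ext fun i => ?_⟩
    rw [constField_X]
    exact eq_C_of_euler_eq_zero _ (by simpa using euler_apply_of_mem_VectP hD i)
  obtain ⟨c, rfl⟩ := hc
  rcases hmax _ (le_tangentSubalg L hgraded) with h | h
  · refine absurd ?_ (not_finiteDimensional_tangentSubalg hn (constPart L))
    rwa [h]
  · exact mem_of_constField_mem_tangentSubalg (constPart L) c (h ▸ LieSubalgebra.mem_top _)
end

section
/- Let L be a finite-dimensional graded maximal subalgebra of Vect_pol(E). Then every nonzero ideal I of L contains Vect_{−1}(E), i.e. contains every constant vector field. -/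
/-! The proof rests on one mechanism. If a finite-dimensional maximal `L` preserves a space `A` of
polynomials, and the stabilizer of `A` contains all polynomial multiples of some nonzero field, then
this stabilizer is infinite-dimensional, so it is not `L` and must be everything (`stab_eq_top`).
It is applied to two spaces `A`, in each case to contradict the existence of a constant field `c`
outside a given subspace. Such a `c` is detected by a linear form `l` with `c l ≠ 0` that is
annihilated at the origin by the subspace (`exists_form`).

* `L` contains every constant field (`VectP_le`). Otherwise let `A` be the ideal of polynomials
  vanishing on the subspace `F = L ∩ Vect_{-1}(E)` of `E`. Since `L` is graded it consists of fields
  tangent to `F` along `F`, so it preserves `A`; and `l ∈ A`, so `g l c` preserves `A` for every `g`.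
  Hence every field preserves `A`, but `c l` is a nonzero constant.

* The ideal `I` contains every constant field. The Euler field lies in `L`, because `L + 𝕜 ℰ` is a
  finite-dimensional subalgebra; hence `I` is graded. If `c ∉ I`, let `A` be the algebra of
  polynomials annihilated by `I`. The ideal property says that `L` preserves `A`, and so does
  `g Y` for every `Y ∈ I`, as it kills `A`. Hence every field preserves `A`. All iterated partial
  derivatives of `Y l`, `Y ∈ I`, are again of this form, since constant fields are in `L`, and they
  vanish at the origin, so `l ∈ A`. Applying multiples of `c` to `l` gives every coordinate
  function, so `I` kills all coordinates and is zero.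
-/

open MvPolynomial

variable (𝕜 : Type*) [Field 𝕜] (n : ℕ)

namespace PolyVect

variable {𝕜 : Type} [RCLike 𝕜] {n : ℕ}

/-! ### Brackets and infinite-dimensionality -/

-- The bracket of derivations is not syntactically the one in the general Lie lemmas, so rewriting
-- needs these restatements.
theorem lie_add' (Y D D' : Vect 𝕜 n) : ⁅Y, D + D'⁆ = ⁅Y, D⁆ + ⁅Y, D'⁆ := lie_add Y D D'

theorem add_lie' (D D' Y : Vect 𝕜 n) : ⁅D + D', Y⁆ = ⁅D, Y⁆ + ⁅D', Y⁆ := add_lie D D' Y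

theorem lie_smul' (Y : Vect 𝕜 n) (r : 𝕜) (D : Vect 𝕜 n) : ⁅Y, r • D⁆ = r • ⁅Y, D⁆ :=
  lie_smul r Y D

theorem smul_lie' (r : 𝕜) (D Y : Vect 𝕜 n) : ⁅r • D, Y⁆ = r • ⁅D, Y⁆ := smul_lie r D Y

theorem not_finite_poly (hn : 0 < n) : ¬ FiniteDimensional 𝕜 (MvPolynomial (Fin n) 𝕜) := by
  intro h
  have : Nonempty (Fin n) := ⟨⟨0, hn⟩⟩
  have := Module.Finite.finite_basis (MvPolynomial.basisMonomials (Fin n) 𝕜)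
  exact not_finite (Fin n →₀ ℕ)

/-- A finite-dimensional subalgebra cannot contain all polynomial multiples of a nonzero field. -/
theorem false_of_smul_mem (hn : 0 < n) (L : LieSubalgebra 𝕜 (Vect 𝕜 n))
    (hfd : FiniteDimensional 𝕜 L) (X : Vect 𝕜 n) (hX : X ≠ 0)
    (h : ∀ g : MvPolynomial (Fin n) 𝕜, g • X ∈ L) : False := by
  apply not_finite_poly (𝕜 := 𝕜) hn
  obtain ⟨q, hq⟩ : ∃ q, X q ≠ 0 := by
    by_contra! hc
    exact hX (Derivation.ext (by simpa using hc))
  let φ : MvPolynomial (Fin n) 𝕜 →ₗ[𝕜] L :=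
    { toFun := fun g => ⟨g • X, h g⟩
      map_add' := fun a b => Subtype.ext (add_smul a b X)
      map_smul' := fun a b => Subtype.ext (smul_assoc a b X) }
  apply FiniteDimensional.of_injective φ
  intro a b hab
  have h1 : a • X = b • X := congrArg Subtype.val hab
  have h2 := DFunLike.congr_fun h1 q
  simp only [Derivation.smul_apply, smul_eq_mul] at h2
  exact mul_right_cancel₀ hq h2

/-! ### The grading by the Euler field -/

theorem euler_monomial (s : Fin n →₀ ℕ) (r : 𝕜) :
    euler 𝕜 n (monomial s r) = (s.degree : 𝕜) • monomial s r := by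
  have hsum : ∀ g : MvPolynomial (Fin n) 𝕜,
      (∑ i, (X i : MvPolynomial (Fin n) 𝕜) • pderiv i : Vect 𝕜 n) g
        = ∑ i, ((X i : MvPolynomial (Fin n) 𝕜) • pderiv i : Vect 𝕜 n) g := fun g =>
    map_sum ((Pi.evalAddMonoidHom (fun _ : MvPolynomial (Fin n) 𝕜 => MvPolynomial (Fin n) 𝕜) g).comp
      Derivation.coeFnAddMonoidHom) _ _
  have h : euler 𝕜 n = ∑ i, (X i : MvPolynomial (Fin n) 𝕜) • pderiv i := by
    apply derivation_ext
    intro j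
    classical
    rw [hsum]
    simp [euler, mkDerivation_X, pderiv_X, Pi.single_apply]
  rw [h, hsum]
  simp only [Derivation.smul_apply, smul_eq_mul,
    X_mul_pderiv_monomial]
  rw [← Finset.sum_smul, Nat.cast_smul_eq_nsmul, Finsupp.degree_eq_sum]

theorem coeff_euler (g : MvPolynomial (Fin n) 𝕜) (m : Fin n →₀ ℕ) :
    coeff m (euler 𝕜 n g) = (m.degree : 𝕜) * coeff m g := by
  classical
  induction g using MvPolynomial.induction_on' with
  | add p q hp hq => simp [hp, hq, mul_add]
  | monomial s r =>
    rw [euler_monomial, coeff_smul, coeff_monomial, smul_eq_mul]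
    split_ifs with h
    · rw [h]
    · simp

/-- `D` has degree `p` iff its coefficients are homogeneous of degree `p + 1`, in Euler's form. -/
theorem mem_VectP (p : ℤ) (D : Vect 𝕜 n) :
    D ∈ VectP 𝕜 n p ↔ ∀ i, euler 𝕜 n (D (X i)) = ((p : 𝕜) + 1) • D (X i) := by
  have h : ∀ i, ⁅euler 𝕜 n, D⁆ (X i) = euler 𝕜 n (D (X i)) - D (X i) := by
    intro i
    rw [Derivation.commutator_apply]
    simp [euler, mkDerivation_X]
  rw [VectP, Module.End.mem_eigenspace_iff, LieAlgebra.ad_apply]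
  constructor
  · intro hD i
    have := h i
    rw [hD, Derivation.smul_apply, eq_sub_iff_add_eq] at this
    rw [← this, add_smul, one_smul]
  · intro hD
    apply derivation_ext
    intro i
    rw [h, hD, Derivation.smul_apply, add_smul, one_smul, add_sub_cancel_right]

theorem mem_VectP_neg_one (D : Vect 𝕜 n) :
    D ∈ VectP 𝕜 n (-1) ↔ ∀ i, ∃ a : 𝕜, D (X i) = C a := by
  rw [mem_VectP]
  refine forall_congr' fun i => ?_
  simp only [Int.cast_neg, Int.cast_one, neg_add_cancel, zero_smul]
  constructor
  · intro h
    refine ⟨constantCoeff (D (X i)), ?_⟩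
    ext m
    classical
    rw [coeff_C]
    split_ifs with hm
    · subst hm; rfl
    · have := coeff_euler (D (X i)) m
      rw [h, coeff_zero] at this
      have h2 : (m.degree : 𝕜) ≠ 0 := by
        rw [Nat.cast_ne_zero, Ne, Finsupp.degree_eq_zero_iff]
        exact fun h => hm h.symm
      exact (mul_eq_zero.mp this.symm).resolve_left h2
  · rintro ⟨a, ha⟩
    rw [ha, derivation_C]

theorem pderiv_mem_VectP (i : Fin n) : (pderiv i : Vect 𝕜 n) ∈ VectP 𝕜 n (-1) := by
  classical
  rw [mem_VectP_neg_one]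
  intro j
  by_cases h : j = i
  · subst h; exact ⟨1, by simp⟩
  · exact ⟨0, by simp [pderiv_X_of_ne h]⟩

/-- A field whose coefficients vanish at the origin takes values vanishing at the origin. -/
theorem constantCoeff_apply_eq_zero (D : Vect 𝕜 n) (h : ∀ i, constantCoeff (D (X i)) = 0)
    (g : MvPolynomial (Fin n) 𝕜) : constantCoeff (D g) = 0 := by
  induction g using MvPolynomial.induction_on with
  | C a => simp
  | add p q hp hq => simp [hp, hq]
  | mul_X p i hp => simp [hp, h i]

theorem constantCoeff_of_mem_VectP {p : ℤ} (hp : 0 ≤ p) {D : Vect 𝕜 n} (hD : D ∈ VectP 𝕜 n p)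
    (g : MvPolynomial (Fin n) 𝕜) : constantCoeff (D g) = 0 := by
  refine constantCoeff_apply_eq_zero D (fun i => ?_) g
  have h1 := (mem_VectP p D).mp hD i
  have h2 := coeff_euler (D (X i)) 0
  rw [h1, coeff_smul] at h2
  have h3 : (p : 𝕜) + 1 ≠ 0 := by
    have : ((p + 1 : ℤ) : 𝕜) ≠ 0 := Int.cast_ne_zero.mpr (by omega)
    simpa using this
  simp only [map_zero, Nat.cast_zero, zero_mul, smul_eq_mul] at h2
  exact (mul_eq_zero.mp h2).resolve_left h3

/-- The operator `∏_{k < N} (ad ℰ - k)`. It kills `Vect_p(E)` for `0 ≤ p < N` and is a nonzero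
scalar on `Vect_{-1}(E)`, so it extracts the component of degree `-1`. -/
noncomputable def extract : ℕ → Vect 𝕜 n → Vect 𝕜 n
  | 0, D => D
  | N + 1, D => ⁅euler 𝕜 n, extract N D⁆ - (N : 𝕜) • extract N D

theorem extract_add (N : ℕ) (D D' : Vect 𝕜 n) :
    extract N (D + D') = extract N D + extract N D' := by
  induction N with
  | zero => rfl
  | succ N ih => simp only [extract, ih, lie_add', smul_add]; abel

theorem extract_of_mem {p : ℤ} {D : Vect 𝕜 n} (hD : D ∈ VectP 𝕜 n p) (N : ℕ) :
    extract N D = (∏ k ∈ Finset.range N, ((p : 𝕜) - k)) • D := by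
  have h : ⁅euler 𝕜 n, D⁆ = (p : 𝕜) • D := Module.End.mem_eigenspace_iff.mp hD
  induction N with
  | zero => simp [extract]
  | succ N ih =>
    rw [extract, ih, lie_smul', h, Finset.prod_range_succ]
    module

theorem extract_mem (W : Submodule 𝕜 (Vect 𝕜 n)) (hW : ∀ D ∈ W, ⁅euler 𝕜 n, D⁆ ∈ W) (N : ℕ)
    {D : Vect 𝕜 n} (hD : D ∈ W) : extract N D ∈ W := by
  induction N with
  | zero => exact hD
  | succ N ih => exact W.sub_mem (hW _ ih) (W.smul_mem _ ih)

/-- If `W` is stable under `ad ℰ`, the degree `-1` component `D₀` of an element `D` of `W` lies in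
`W`. The last clause says that `D` and `D₀` have the same value at the origin. -/
theorem exists_component (W : Submodule 𝕜 (Vect 𝕜 n)) (hW : ∀ D ∈ W, ⁅euler 𝕜 n, D⁆ ∈ W)
    (hsup : W ≤ ⨆ p ≥ (-1 : ℤ), VectP 𝕜 n p) {D : Vect 𝕜 n} (hD : D ∈ W) :
    ∃ D₀ ∈ W, D₀ ∈ VectP 𝕜 n (-1) ∧ ∀ g, constantCoeff (D g) = constantCoeff (D₀ g) := by
  have key : ∃ D₀ ∈ VectP 𝕜 n (-1), (∀ g, constantCoeff (D g) = constantCoeff (D₀ g)) ∧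
      ∃ N₀ : ℕ, ∀ N ≥ N₀,
        extract N D = (∏ k ∈ Finset.range N, (((-1 : ℤ) : 𝕜) - k)) • D₀ := by
    have h := hsup hD
    clear hD
    rw [iSup_subtype'] at h
    induction h using Submodule.iSup_induction' with
    | mem p x hx =>
      obtain ⟨p, hp⟩ := p
      by_cases h1 : p = -1
      · subst h1
        exact ⟨x, hx, fun g => rfl, 0, fun N _ => extract_of_mem hx N⟩
      · change x ∈ VectP 𝕜 n p at hx
        have hp0 : 0 ≤ p := by omega
        refine ⟨0, Submodule.zero_mem _, fun g => ?_, p.toNat + 1, fun N hN => ?_⟩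
        · simpa using constantCoeff_of_mem_VectP hp0 hx g
        · rw [extract_of_mem hx, smul_zero, Finset.prod_eq_zero (i := p.toNat), zero_smul]
          · simp; omega
          · rw [sub_eq_zero, ← Int.cast_natCast, Int.toNat_of_nonneg (by omega)]
    | zero =>
      refine ⟨0, Submodule.zero_mem _, fun g => rfl, 0, fun N _ => ?_⟩
      rw [extract_of_mem (p := 0) (Submodule.zero_mem _), smul_zero, smul_zero]
    | add x y _ _ hx hy =>
      obtain ⟨x₀, hx₀, hxg, N₁, hN₁⟩ := hx
      obtain ⟨y₀, hy₀, hyg, N₂, hN₂⟩ := hy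
      refine ⟨x₀ + y₀, Submodule.add_mem _ hx₀ hy₀, fun g => ?_, max N₁ N₂, fun N hN => ?_⟩
      · simp [hxg, hyg]
      · rw [extract_add, hN₁ N (le_of_max_le_left hN), hN₂ N (le_of_max_le_right hN), smul_add]
  obtain ⟨D₀, hD₀, hg, N, hN⟩ := key
  refine ⟨D₀, ?_, hD₀, hg⟩
  have h1 := extract_mem W hW N hD
  rw [hN N le_rfl] at h1
  refine (W.smul_mem_iff ?_).mp h1
  rw [Finset.prod_ne_zero_iff]
  intro k _ h
  have : ((-1 - k : ℤ) : 𝕜) = 0 := by push_cast; simpa using h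
  rw [Int.cast_eq_zero] at this
  omega

/-- A constant field maps a linear form to a constant. -/
theorem apply_const {D : Vect 𝕜 n} (hD : D ∈ VectP 𝕜 n (-1)) (a : Fin n → 𝕜) :
    ∃ r, D (∑ i, C (a i) * X i) = C r := by
  rw [mem_VectP_neg_one] at hD
  choose b hb using hD
  exact ⟨∑ i, a i * b i, by simp [hb]⟩

/-- A constant field outside `W` is separated from `W` by a linear form `l`: `l` is annihilated at
the origin by all of `W` but not by `c`. -/
theorem exists_form (W : Submodule 𝕜 (Vect 𝕜 n)) (hW : ∀ D ∈ W, ⁅euler 𝕜 n, D⁆ ∈ W)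
    (hsup : W ≤ ⨆ p ≥ (-1 : ℤ), VectP 𝕜 n p) {c : Vect 𝕜 n} (hc : c ∈ VectP 𝕜 n (-1))
    (hcW : c ∉ W) :
    ∃ a : Fin n → 𝕜, (∀ D ∈ W, constantCoeff (D (∑ i, C (a i) * X i)) = 0) ∧
      constantCoeff (c (∑ i, C (a i) * X i)) ≠ 0 := by
  let φ : Vect 𝕜 n →ₗ[𝕜] (Fin n → 𝕜) :=
    { toFun := fun D i => constantCoeff (D (X i))
      map_add' := fun a b => by ext; simp
      map_smul' := fun a b => by ext; simp [smul_eq_C_mul] }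
  have hφ : ∀ D i, φ D i = constantCoeff (D (X i)) := fun _ _ => rfl
  have hnot : φ c ∉ W.map φ := by
    rintro ⟨D, hD, hDc⟩
    obtain ⟨D₀, hD₀, hD₁, hg⟩ := exists_component W hW hsup hD
    apply hcW
    convert hD₀
    apply derivation_ext
    intro i
    obtain ⟨r, hr⟩ := (mem_VectP_neg_one c).mp hc i
    obtain ⟨s, hs⟩ := (mem_VectP_neg_one D₀).mp hD₁ i
    have h1 := congrFun hDc i
    rw [hφ, hφ, hg, hr, hs, constantCoeff_C, constantCoeff_C] at h1
    rw [hr, hs, h1]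
  obtain ⟨ψ, hψ, hker⟩ := Submodule.exists_le_ker_of_notMem hnot
  have hform : ∀ D : Vect 𝕜 n,
      constantCoeff (D (∑ i, C (ψ (Pi.single i 1)) * X i)) = ψ (φ D) := by
    intro D
    rw [LinearMap.pi_apply_eq_sum_univ ψ]
    have h1 : ∀ i : Fin n, (Pi.single i 1 : Fin n → 𝕜) = fun j => if i = j then 1 else 0 := by
      intro i
      ext j
      simp [Pi.single_apply, eq_comm]
    simp [hφ, mul_comm, h1]
  refine ⟨fun i => ψ (Pi.single i 1), fun D hD => ?_, ?_⟩
  · rw [hform]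
    exact hker (Submodule.mem_map_of_mem hD)
  · rw [hform]
    exact hψ

/-- A family of polynomials vanishing at the origin and stable under all partial derivatives is
zero (Taylor's formula). -/
theorem eq_zero_of_stable (P : Set (MvPolynomial (Fin n) 𝕜)) (h0 : ∀ g ∈ P, constantCoeff g = 0)
    (hP : ∀ g ∈ P, ∀ i, pderiv i g ∈ P) {g : MvPolynomial (Fin n) 𝕜} (hg : g ∈ P) : g = 0 := by
  have key : ∀ d : ℕ, ∀ m : Fin n →₀ ℕ, m.degree = d → ∀ g ∈ P, coeff m g = 0 := by
    intro d
    induction d with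
    | zero =>
      intro m hm g hg
      rw [Finsupp.degree_eq_zero_iff] at hm
      subst hm
      exact h0 g hg
    | succ d ih =>
      intro m hm g hg
      obtain ⟨i, hi⟩ : ∃ i, m i ≠ 0 := by
        by_contra! hc
        have : m = 0 := Finsupp.ext hc
        simp [this] at hm
      obtain ⟨m', rfl⟩ : ∃ m', m = m' + Finsupp.single i 1 := by
        refine ⟨m - Finsupp.single i 1, (tsub_add_cancel_of_le ?_).symm⟩
        rw [Finsupp.single_le_iff]; omega
      have h1 := ih m' (by simpa using hm) _ (hP g hg i)
      rw [coeff_pderiv] at h1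
      exact (mul_eq_zero.mp h1).resolve_right (by exact_mod_cast Nat.succ_ne_zero (m' i))
  ext m
  simpa using key _ m rfl g hg

/-! ### Stabilizers and maximality -/

/-- The Lie subalgebra of vector fields preserving a space `A` of polynomials. -/
def stab (A : Submodule 𝕜 (MvPolynomial (Fin n) 𝕜)) : LieSubalgebra 𝕜 (Vect 𝕜 n) where
  carrier := {D | ∀ g ∈ A, D g ∈ A}
  add_mem' hD hD' g hg := A.add_mem (hD g hg) (hD' g hg)
  zero_mem' g _ := A.zero_mem
  smul_mem' r D hD g hg := A.smul_mem r (hD g hg)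
  lie_mem' {D D'} hD hD' g hg := by
    rw [Derivation.commutator_apply]
    exact A.sub_mem (hD _ (hD' g hg)) (hD' _ (hD g hg))

/-- A stabilizer containing `L` and all polynomial multiples of a nonzero field is too large to
equal the finite-dimensional `L`, hence is everything. -/
theorem stab_eq_top (hn : 0 < n) {L : LieSubalgebra 𝕜 (Vect 𝕜 n)}
    (hfd : FiniteDimensional 𝕜 L) (hmax : IsMaxSubalg 𝕜 n L)
    (A : Submodule 𝕜 (MvPolynomial (Fin n) 𝕜)) (hL : L ≤ stab A) {D : Vect 𝕜 n} (hD : D ≠ 0)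
    (h : ∀ g : MvPolynomial (Fin n) 𝕜, g • D ∈ stab A) : stab A = ⊤ := by
  rcases hmax _ hL with h1 | h1
  · rw [h1] at h
    exact (false_of_smul_mem hn L hfd D hD h).elim
  · exact h1

theorem lie_euler_mem {L : LieSubalgebra 𝕜 (Vect 𝕜 n)} (hgraded : IsGradedSubalg 𝕜 n L) :
    ∀ D ∈ L.toSubmodule, ⁅euler 𝕜 n, D⁆ ∈ L.toSubmodule := by
  intro D hD
  have h : D ∈ ⨆ p ≥ (-1 : ℤ), (L.toSubmodule ⊓ VectP 𝕜 n p) := hgraded ▸ hD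
  rw [iSup_subtype'] at h
  induction h using Submodule.iSup_induction' with
  | mem p x hx =>
    have h : ⁅euler 𝕜 n, x⁆ = ((p : ℤ) : 𝕜) • x := Module.End.mem_eigenspace_iff.mp hx.2
    rw [h]
    exact Submodule.smul_mem _ _ hx.1
  | zero =>
    have h : ⁅euler 𝕜 n, (0 : Vect 𝕜 n)⁆ = 0 := lie_zero (euler 𝕜 n)
    rw [h]
    exact Submodule.zero_mem _
  | add x y hx' hy' hx hy =>
    have hle : (⨆ x : {p : ℤ // p ≥ -1}, L.toSubmodule ⊓ VectP 𝕜 n x) ≤ L.toSubmodule :=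
      iSup_le fun _ => inf_le_left
    rw [lie_add']
    exact Submodule.add_mem _ (hx (hle hx')) (hy (hle hy'))

theorem le_iSup_VectP {L : LieSubalgebra 𝕜 (Vect 𝕜 n)} (hgraded : IsGradedSubalg 𝕜 n L) :
    L.toSubmodule ≤ ⨆ p ≥ (-1 : ℤ), VectP 𝕜 n p := by
  rw [hgraded]
  exact iSup₂_mono fun p _ => inf_le_right

/-- The subalgebra `L + 𝕜 ℰ` is still finite-dimensional, so it is `L`. -/
theorem euler_mem (hn : 0 < n) {L : LieSubalgebra 𝕜 (Vect 𝕜 n)}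
    (hfd : FiniteDimensional 𝕜 L) (hgraded : IsGradedSubalg 𝕜 n L) (hmax : IsMaxSubalg 𝕜 n L) :
    euler 𝕜 n ∈ L := by
  have hE := lie_euler_mem hgraded
  let L' : LieSubalgebra 𝕜 (Vect 𝕜 n) :=
    { (L.toSubmodule ⊔ 𝕜 ∙ euler 𝕜 n : Submodule 𝕜 (Vect 𝕜 n)) with
      lie_mem' := by
        intro x y hx hy
        obtain ⟨u, hu, s, hs, rfl⟩ := Submodule.mem_sup.mp hx
        obtain ⟨v, hv, t, ht, rfl⟩ := Submodule.mem_sup.mp hy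
        obtain ⟨s, rfl⟩ := Submodule.mem_span_singleton.mp hs
        obtain ⟨t, rfl⟩ := Submodule.mem_span_singleton.mp ht
        apply Submodule.mem_sup_left
        have h : ⁅u + s • euler 𝕜 n, v + t • euler 𝕜 n⁆
            = ⁅u, v⁆ - t • ⁅euler 𝕜 n, u⁆ + s • ⁅euler 𝕜 n, v⁆ := by
          have h1 : ⁅u, euler 𝕜 n⁆ = -⁅euler 𝕜 n, u⁆ := (lie_skew u (euler 𝕜 n)).symm
          have h2 : ⁅euler 𝕜 n, euler 𝕜 n⁆ = 0 := lie_self (euler 𝕜 n)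
          rw [add_lie', lie_add', lie_add', smul_lie', smul_lie', lie_smul', lie_smul', h1, h2]
          module
        rw [h]
        exact Submodule.add_mem _ (Submodule.sub_mem _ (L.lie_mem hu hv)
          (Submodule.smul_mem _ _ (hE u hu))) (Submodule.smul_mem _ _ (hE v hv)) }
  have hmem : euler 𝕜 n ∈ L' :=
    Submodule.mem_sup_right (Submodule.mem_span_singleton_self (euler 𝕜 n))
  have hfd' : FiniteDimensional 𝕜 L' := by
    have : FiniteDimensional 𝕜 L.toSubmodule := hfd
    exact (inferInstance : FiniteDimensional 𝕜
      (L.toSubmodule ⊔ 𝕜 ∙ euler 𝕜 n : Submodule 𝕜 (Vect 𝕜 n)))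
  rcases hmax L' (fun x hx => Submodule.mem_sup_left hx) with h | h
  · rwa [h] at hmem
  · refine (false_of_smul_mem hn L' hfd' (pderiv ⟨0, hn⟩) ?_ fun g => ?_).elim
    · intro h0
      have := DFunLike.congr_fun h0 (X ⟨0, hn⟩)
      simp at this
    · rw [h]; trivial

/-! ### Constant fields belong to `L` -/

/-- The differential operators that are products of constant fields belonging to `L`. -/
noncomputable def constOps (L : LieSubalgebra 𝕜 (Vect 𝕜 n)) :
    Submonoid (Module.End 𝕜 (MvPolynomial (Fin n) 𝕜)) :=
  Submonoid.closure {u | ∃ f ∈ L, f ∈ VectP 𝕜 n (-1) ∧ u = f.toLinearMap}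

/-- The polynomials vanishing on the subspace `L ∩ Vect_{-1}(E)` of `E`, described by the vanishing
at the origin of all their derivatives along that subspace. -/
noncomputable def vanishing (L : LieSubalgebra 𝕜 (Vect 𝕜 n)) :
    Submodule 𝕜 (MvPolynomial (Fin n) 𝕜) where
  carrier := {g | ∀ u ∈ constOps L, constantCoeff (u g) = 0}
  add_mem' hg hh u hu := by rw [map_add, map_add, hg u hu, hh u hu, add_zero]
  zero_mem' u _ := by simp
  smul_mem' r g hg u hu := by rw [map_smul, smul_eq_C_mul, map_mul, hg u hu, mul_zero]

theorem apply_mem_vanishing {L : LieSubalgebra 𝕜 (Vect 𝕜 n)} {f : Vect 𝕜 n} (hf : f ∈ L)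
    (hf' : f ∈ VectP 𝕜 n (-1)) {g : MvPolynomial (Fin n) 𝕜} (hg : g ∈ vanishing L) :
    f g ∈ vanishing L := fun u hu =>
  hg (u * f.toLinearMap) (Submonoid.mul_mem _ hu (Submonoid.subset_closure ⟨f, hf, hf', rfl⟩))

theorem mul_mem_vanishing {L : LieSubalgebra 𝕜 (Vect 𝕜 n)} (h : MvPolynomial (Fin n) 𝕜)
    {g : MvPolynomial (Fin n) 𝕜} (hg : g ∈ vanishing L) : h * g ∈ vanishing L := by
  intro u hu
  induction hu using Submonoid.closure_induction_right generalizing g h with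
  | one =>
    have := hg 1 (Submonoid.one_mem _)
    simp only [Module.End.one_apply] at this ⊢
    rw [map_mul, this, mul_zero]
  | mul_right u hu v hv ih =>
    obtain ⟨f, hf, hf', rfl⟩ := hv
    have h1 : (u * f.toLinearMap) (h * g) = u (h * f g) + u (f h * g) := by
      rw [← map_add, Module.End.mul_apply]
      congr 1
      simp [mul_comm]
    rw [h1, map_add, ih h (apply_mem_vanishing hf hf' hg), ih (f h) hg, add_zero]

/-- Commuting `D` past the constant fields reduces to the origin, where only the degree `-1`
component of `D`, itself a constant field of `L`, contributes. -/
theorem le_stab_vanishing {L : LieSubalgebra 𝕜 (Vect 𝕜 n)} (hgraded : IsGradedSubalg 𝕜 n L) :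
    L ≤ stab (vanishing L) := by
  intro D hD g hg u hu
  induction hu using Submonoid.closure_induction_right generalizing g D with
  | one =>
    obtain ⟨D₀, hD₀, hD₁, h⟩ := exists_component L.toSubmodule (lie_euler_mem hgraded)
      (le_iSup_VectP hgraded) hD
    rw [Module.End.one_apply, h]
    exact apply_mem_vanishing hD₀ hD₁ hg 1 (Submonoid.one_mem _)
  | mul_right u hu v hv ih =>
    obtain ⟨f, hf, hf', rfl⟩ := hv
    have h1 : (u * f.toLinearMap) (D g) = u (D (f g)) + u (⁅f, D⁆ g) := by
      rw [← map_add, Module.End.mul_apply, Derivation.commutator_apply]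
      congr 1
      simp
    rw [h1, map_add, ih hD _ (apply_mem_vanishing hf hf' hg), ih (L.lie_mem hf hD) _ hg, add_zero]

theorem VectP_le (hn : 0 < n) {L : LieSubalgebra 𝕜 (Vect 𝕜 n)}
    (hfd : FiniteDimensional 𝕜 L) (hgraded : IsGradedSubalg 𝕜 n L) (hmax : IsMaxSubalg 𝕜 n L) :
    VectP 𝕜 n (-1) ≤ L.toSubmodule := by
  intro c hc
  by_contra hcL
  obtain ⟨a, ha, hca⟩ := exists_form L.toSubmodule (lie_euler_mem hgraded)
      (le_iSup_VectP hgraded) hc hcL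
  have hl0 : constantCoeff (∑ i, C (a i) * X i : MvPolynomial (Fin n) 𝕜) = 0 := by simp
  have hconst : ∀ f ∈ VectP 𝕜 n (-1), ∃ r, f (∑ i, C (a i) * X i) = C r :=
    fun f hf => apply_const hf a
  generalize (∑ i, C (a i) * X i : MvPolynomial (Fin n) 𝕜) = l at *
  have hl : l ∈ vanishing L := by
    intro u hu
    induction hu using Submonoid.closure_induction_right with
    | one => exact hl0
    | mul_right u hu v hv ih =>
      obtain ⟨f, hf, hf', rfl⟩ := hv
      obtain ⟨r, hr⟩ := hconst f hf'
      have h1 : f l = 0 := by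
        have := ha f hf
        rw [hr, constantCoeff_C] at this
        rw [hr, this, map_zero]
      have h2 : f.toLinearMap l = 0 := h1
      rw [Module.End.mul_apply, h2, map_zero, map_zero]
  -- All multiples of `l • c` preserve the ideal, as their values are multiples of `l`.
  have hlc : l • c ≠ 0 := by
    intro h
    have := DFunLike.congr_fun h l
    simp only [Derivation.smul_apply, smul_eq_mul, Derivation.coe_zero, Pi.zero_apply,
      mul_eq_zero] at this
    rcases this with h | h
    · rw [h] at hca; simp at hca
    · rw [h] at hca; simp at hca
  have htop := stab_eq_top hn hfd hmax (vanishing L) (le_stab_vanishing hgraded) hlc (by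
    intro g q hq
    have : (g • l • c) q = (g * c q) * l := by
      simp only [Derivation.smul_apply, smul_eq_mul]; ring
    rw [this]
    exact mul_mem_vanishing _ hl)
  have hc' : c ∈ stab (vanishing L) := htop ▸ LieSubalgebra.mem_top c
  exact hca (hc' l hl 1 (Submonoid.one_mem _))

/-! ### Ideals -/

/-- The polynomials annihilated by every vector field of `I`. -/
noncomputable def invariants (I : Submodule 𝕜 (Vect 𝕜 n)) :
    Submodule 𝕜 (MvPolynomial (Fin n) 𝕜) where
  carrier := {g | ∀ D ∈ I, D g = 0}
  add_mem' hg hh D hD := by rw [map_add, hg D hD, hh D hD, add_zero]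
  zero_mem' D _ := map_zero D
  smul_mem' r g hg D hD := by rw [D.map_smul, hg D hD, smul_zero]

end PolyVect

open PolyVect in
/-- Let `L` be a finite-dimensional graded maximal subalgebra of `Vect_pol(E)`.  Then every
nonzero ideal `I` of `L` contains `Vect₋₁(E)`, i.e. all constant vector fields. -/
theorem statement9 (𝕜 : Type) [RCLike 𝕜] (n : ℕ) (hn : 0 < n)
    (L : LieSubalgebra 𝕜 (Vect 𝕜 n)) (hfd : FiniteDimensional 𝕜 L)
    (hgraded : IsGradedSubalg 𝕜 n L) (hmax : IsMaxSubalg 𝕜 n L)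
    (I : Submodule 𝕜 (Vect 𝕜 n)) (hIL : I ≤ L.toSubmodule)
    (hideal : ∀ x ∈ L, ∀ y ∈ I, ⁅x, y⁆ ∈ I) (hI : I ≠ ⊥) :
    VectP 𝕜 n (-1) ≤ I := by
  intro c hc
  by_contra hcI
  have hE := euler_mem hn hfd hgraded hmax
  have hV := VectP_le hn hfd hgraded hmax
  obtain ⟨a, ha, hca⟩ := exists_form I (fun D hD => hideal _ hE D hD)
    (hIL.trans (le_iSup_VectP hgraded)) hc hcI
  have hconst : ∀ f ∈ VectP 𝕜 n (-1), ∃ r, f (∑ i, C (a i) * X i) = C r :=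
    fun f hf => apply_const hf a
  generalize (∑ i, C (a i) * X i : MvPolynomial (Fin n) 𝕜) = l at *
  have hl : l ∈ invariants I := by
    intro D hD
    -- `∂ᵢ (D l) = ⁅∂ᵢ, D⁆ l` because `∂ᵢ l` is constant, so Taylor's formula applies.
    refine eq_zero_of_stable {g | ∃ D ∈ I, g = D l} ?_ ?_ ⟨D, hD, rfl⟩
    · rintro g ⟨D, hD, rfl⟩
      exact ha D hD
    · rintro g ⟨D, hD, rfl⟩ i
      refine ⟨⁅(pderiv i : Vect 𝕜 n), D⁆, hideal _ (hV (pderiv_mem_VectP i)) D hD, ?_⟩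
      obtain ⟨r, hr⟩ := hconst _ (pderiv_mem_VectP i)
      rw [Derivation.commutator_apply, hr, derivation_C, sub_zero]
  have hstab : L ≤ stab (invariants I) := by
    intro D hD g hg Y hY
    have h1 := hg _ (hideal D hD Y hY)
    rw [Derivation.commutator_apply, hg Y hY, map_zero, zero_sub, neg_eq_zero] at h1
    exact h1
  obtain ⟨Y, hY, hY0⟩ := Submodule.exists_mem_ne_zero_of_ne_bot hI
  have htop := stab_eq_top hn hfd hmax _ hstab hY0 (by
    intro g q hq
    rw [Derivation.smul_apply, hq Y hY, smul_zero]
    exact Submodule.zero_mem _)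
  obtain ⟨r, hr⟩ := hconst c hc
  have hr0 : r ≠ 0 := by rwa [hr, constantCoeff_C] at hca
  apply hY0
  apply derivation_ext
  intro j
  have hmem : (C r⁻¹ * X j : MvPolynomial (Fin n) 𝕜) • c ∈ stab (invariants I) :=
    htop ▸ LieSubalgebra.mem_top _
  have h1 := hmem l hl Y hY
  have h2 : ((C r⁻¹ * X j : MvPolynomial (Fin n) 𝕜) • c) l = X j := by
    rw [Derivation.smul_apply, hr, smul_eq_mul, mul_right_comm, ← C_mul, inv_mul_cancel₀ hr0,
      C_1, one_mul]
  rw [h2] at h1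
  rw [h1, Derivation.coe_zero, Pi.zero_apply]
end
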